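/- arXiv:2509.00241 — 3 statements merged into one kernel-verified Lean document; each statement's English description precedes it below -/
import Mathlib

section
/- Suppose that T(x) is a closed connected subset of S and that ‖τ̄_k(x)/τ_k(x) − τ̄_{k+1}(x)/τ_{k+1}(x)‖_∞ → 0 as k → ∞. Then V(x) = πT(x) = {ν_p̄ : p̄ ∈ T(x)}. -/
open MeasureTheory Filter Topology Set
open scoped ENNReal

noncomputable section

variable {X : Type*} [MetricSpace X] [CompactSpace X] [MeasurableSpace X] [BorelSpace X]

/-- The `n`-th empirical measure `e_n(x) = (1/n) ∑_{k<n} δ_{f^k x}`. -/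
def empMeasure (f : X → X) (n : ℕ) (x : X) : Measure X :=
  (n : ℝ≥0∞)⁻¹ • ∑ k ∈ Finset.range n, Measure.dirac (f^[k] x)

/-- Weak* convergence of a sequence of measures, tested against bounded continuous functions. -/
def WeakTendsto (μ : ℕ → Measure X) (ν : Measure X) : Prop :=
  ∀ g : BoundedContinuousFunction X ℝ,
    Tendsto (fun n => ∫ y, g y ∂(μ n)) atTop (𝓝 (∫ y, g y ∂ν))

/-- `V(x)`: the set of weak* limit points of `(e_n(x))_{n ≥ 1}`. -/
def Vset (f : X → X) (x : X) : Set (Measure X) :=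
  {ν | ∃ φ : ℕ → ℕ, StrictMono φ ∧ WeakTendsto (fun k => empMeasure f (φ k + 1) x) ν}

/-- The simplex `S = {p̄ ∈ [0,1]^d : p₁ + ⋯ + p_d = 1}`. -/
def simplexS (d : ℕ) : Set (Fin d → ℝ) :=
  {p | (∀ i, p i ∈ Set.Icc (0:ℝ) 1) ∧ ∑ i, p i = 1}

/-- The measure `ν_p̄ = ∑_j p_j δ_{ξ_j}`. -/
def nuMeasure {d : ℕ} (ξ : Fin d → X) (p : Fin d → ℝ) : Measure X :=
  ∑ j, ENNReal.ofReal (p j) • Measure.dirac (ξ j)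

/-- The first hit time `τ(x) = min {n ≥ 1 : f^n(x) ∈ Y}` (junk value `0` if the orbit
never hits `Y`). -/
def hitTime (f : X → X) (Y : Set X) (x : X) : ℕ :=
  sInf {n | 1 ≤ n ∧ f^[n] x ∈ Y}

/-- The first return map `F = f^τ`. -/
def retMap (f : X → X) (Y : Set X) (x : X) : X :=
  f^[hitTime f Y x] x

/-- The Birkhoff sums `τ_k(x) = ∑_{j<k} τ(F^j x)` of the return time under `F`. -/
def tauSum (f : X → X) (Y : Set X) (k : ℕ) (x : X) : ℕ :=
  ∑ j ∈ Finset.range k, hitTime f Y ((retMap f Y)^[j] x)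

/-- `τ^{(i)}(y) = #{1 ≤ n ≤ τ(y) : f^n(y) ∈ A}` (with `A = X_i`). -/
def tauJ (f : X → X) (Y A : Set X) (y : X) : ℕ :=
  ∑ n ∈ Finset.Icc 1 (hitTime f Y y), A.indicator (fun _ => 1) (f^[n] y)

/-- The Birkhoff sums `τ^{(i)}_k(x) = ∑_{j<k} τ^{(i)}(F^j x)`. -/
def tauJSum (f : X → X) (Y A : Set X) (k : ℕ) (x : X) : ℕ :=
  ∑ j ∈ Finset.range k, tauJ f Y A ((retMap f Y)^[j] x)

/-- The vector of ratios `τ̄_k(x)/τ_k(x) ∈ [0,1]^d`. -/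
def tauRatio (f : X → X) (Y : Set X) {d : ℕ} (Xp : Fin d → Set X) (k : ℕ) (x : X) :
    Fin d → ℝ :=
  fun i => (tauJSum f Y (Xp i) k x : ℝ) / (tauSum f Y k x : ℝ)

/-- `T(x) ⊆ [0,1]^d`: the set of limit points of the sequence `(τ̄_k(x)/τ_k(x))_{k ≥ 1}`. -/
def Tset (f : X → X) (Y : Set X) {d : ℕ} (Xp : Fin d → Set X) (x : X) :
    Set (Fin d → ℝ) :=
  {p | ∃ φ : ℕ → ℕ, StrictMono φ ∧
    Tendsto (fun k => tauRatio f Y Xp (φ k + 1) x) atTop (𝓝 p)}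

/-
Cut the orbit of `x` at its visits to `Y`. During an excursion between two visits the orbit stays
in a single cell `X_i`, so, up to `O(1/N)`, the vector of visit frequencies of the cells moves
monotonically along the segment joining its values `τ̄_k/τ_k` and `τ̄_{k+1}/τ_{k+1}` at the ends of
the excursion. As these get close, the frequencies at all times have the same limit points as at
the return times, namely `T(x)`. Since `T(x) ⊆ S`, the frequency of visits to `Y` tends to `0`; by
bounded hit times, so does the frequency of the times at which the orbit is not close to the point
`ξ_i` of its current cell. Hence `∫ g de_N(x) - ∑_i freq_i g(ξ_i) → 0` for every continuous `g`.
-/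

section BirkhoffAverages

variable {α E : Type*} [NormedAddCommGroup E] [NormedSpace ℝ E] {f : α → α} {x : α}

theorem birkhoffAverage_add_sub_birkhoffAverage_sub_smul (f : α → α) (h : α → E) (n m : ℕ) (x : α)
    (v : E) (hnm : 0 < n + m) :
    birkhoffAverage ℝ f h (n + m) x - birkhoffAverage ℝ f h n x
        - ((m : ℝ) / (n + m)) • (v - birkhoffAverage ℝ f h n x)
      = ((n : ℝ) + m)⁻¹ • (birkhoffSum f h m (f^[n] x) - (m : ℝ) • v) := by
  have hsum : birkhoffSum f h n x = (n : ℝ) • birkhoffAverage ℝ f h n x := by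
    rcases eq_or_ne n 0 with rfl | hn
    · simp
    · rw [birkhoffAverage, smul_inv_smul₀ (Nat.cast_ne_zero.2 hn)]
  have hne : (n : ℝ) + m ≠ 0 := by exact_mod_cast hnm.ne'
  rw [birkhoffAverage, birkhoffSum_add, hsum, Nat.cast_add]
  match_scalars <;> field_simp
  ring

-- Up to `C / (n + m)`, the average moves from its value at `n` towards `v`, by the fraction
-- `m / (n + m)` of the way, which increases with `m`.
theorem norm_birkhoffAverage_add_sub_le {h : α → E} {n L : ℕ} {v : E} {C : ℝ}
    (hsum : ∀ m ≤ L, ‖birkhoffSum f h m (f^[n] x) - (m : ℝ) • v‖ ≤ C)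
    {m : ℕ} (hm0 : 0 < m) (hmL : m ≤ L) :
    ‖birkhoffAverage ℝ f h (n + m) x - birkhoffAverage ℝ f h n x‖
      ≤ ‖birkhoffAverage ℝ f h (n + L) x - birkhoffAverage ℝ f h n x‖ + 2 * C / (n + m) := by
  set A : ℕ → E := fun N => birkhoffAverage ℝ f h N x
  have hC : 0 ≤ C := (norm_nonneg _).trans (hsum 0 (Nat.zero_le L))
  have hmR : (0 : ℝ) < m := by exact_mod_cast hm0
  have hmLR : (m : ℝ) ≤ L := by exact_mod_cast hmL
  have hLR : (0 : ℝ) < L := hmR.trans_le hmLR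
  have error_le : ∀ l ≤ L, 0 < l →
      ‖A (n + l) - A n - ((l : ℝ) / (n + l)) • (v - A n)‖ ≤ C / (n + l) := by
    intro l hlL hl0
    rw [birkhoffAverage_add_sub_birkhoffAverage_sub_smul f h n l x v (by lia), norm_smul,
      Real.norm_of_nonneg (by positivity), inv_mul_eq_div]
    gcongr
    exact hsum l hlL
  have fraction_le : (m : ℝ) / (n + m) ≤ L / (n + L) := by
    rw [div_le_div_iff₀ (by positivity) (by positivity)]
    nlinarith [(Nat.cast_nonneg n : (0 : ℝ) ≤ n)]
  calc ‖A (n + m) - A n‖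
      ≤ ‖((m : ℝ) / (n + m)) • (v - A n)‖ + C / (n + m) :=
        (norm_le_norm_add_norm_sub' _ _).trans (add_le_add_right (error_le m hmL hm0) _)
    _ ≤ ‖((L : ℝ) / (n + L)) • (v - A n)‖ + C / (n + m) := by
        simp only [norm_smul]
        gcongr
        rwa [Real.norm_of_nonneg (by positivity), Real.norm_of_nonneg (by positivity)]
    _ ≤ ‖A (n + L) - A n‖ + C / (n + L) + C / (n + m) := by
        gcongr
        exact (norm_le_norm_add_norm_sub _ _).trans
          (add_le_add_right (error_le L le_rfl (by lia)) _)
    _ ≤ ‖A (n + L) - A n‖ + C / (n + m) + C / (n + m) := by gcongr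
    _ = ‖A (n + L) - A n‖ + 2 * C / (n + m) := by ring

theorem tendsto_birkhoffAverage_iterate_apply {h : α → E} {l : E}
    (hh : Bornology.IsBounded (range h))
    (hl : Tendsto (fun N => birkhoffAverage ℝ f h N x) atTop (𝓝 l)) (b : ℕ) :
    Tendsto (fun N => birkhoffAverage ℝ f h N (f^[b] x)) atTop (𝓝 l) := by
  induction b with
  | zero => exact hl
  | succ b ih =>
    have hshift := tendsto_birkhoffAverage_apply_sub_birkhoffAverage' ℝ hh f (f^[b] x)
    simpa [Function.iterate_succ_apply'] using hshift.add ih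

theorem norm_birkhoffAverage_le {h : α → E} {ψ : α → ℝ} {ε : ℝ} (hε : 0 ≤ ε)
    (hle : ∀ z, ‖h z‖ ≤ ε + ψ z) (N : ℕ) (x : α) :
    ‖birkhoffAverage ℝ f h N x‖ ≤ ε + birkhoffAverage ℝ f ψ N x := by
  rcases N.eq_zero_or_pos with rfl | hN
  · simpa using hε
  have hNR : (0 : ℝ) < N := by exact_mod_cast hN
  have hsum : ‖birkhoffSum f h N x‖ ≤ N * ε + birkhoffSum f ψ N x := by
    simpa [birkhoffSum, Finset.sum_add_distrib] using
      norm_sum_le_of_le (Finset.range N) fun k _ => hle (f^[k] x)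
  rw [birkhoffAverage, birkhoffAverage, norm_smul, norm_inv, RCLike.norm_natCast, smul_eq_mul,
    inv_mul_le_iff₀ hNR]
  field_simp
  linarith

theorem tendsto_birkhoffAverage_zero_of_norm_le {h : α → E}
    (hle : ∀ ε > 0, ∃ ψ : α → ℝ, (∀ z, ‖h z‖ ≤ ε + ψ z) ∧
      Tendsto (fun N => birkhoffAverage ℝ f ψ N x) atTop (𝓝 0)) :
    Tendsto (fun N => birkhoffAverage ℝ f h N x) atTop (𝓝 0) := by
  refine NormedAddGroup.tendsto_nhds_zero.2 fun ε hε => ?_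
  obtain ⟨ψ, hψ, hlim⟩ := hle (ε / 2) (half_pos hε)
  filter_upwards [hlim.eventually_lt_const (half_pos hε)] with N hN
  linarith [norm_birkhoffAverage_le (f := f) (half_pos hε).le hψ N x]

theorem birkhoffAverage_sum_iterate (f : α → α) (h : α → E) (s : Finset ℕ) (N : ℕ) (x : α) :
    birkhoffAverage ℝ f (fun z => ∑ b ∈ s, h (f^[b] z)) N x
      = ∑ b ∈ s, birkhoffAverage ℝ f h N (f^[b] x) := by
  simp only [birkhoffAverage, birkhoffSum, ← Function.iterate_add_apply, ← Finset.smul_sum]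
  rw [Finset.sum_comm]
  simp only [add_comm]

theorem isBounded_range_indicator_one (s : Set α) :
    Bornology.IsBounded (range (s.indicator (1 : α → ℝ))) :=
  (Metric.isBounded_Icc 0 1).subset <| range_subset_iff.2 fun z =>
    ⟨indicator_nonneg (fun _ _ => zero_le_one) z, indicator_le_self' (fun _ _ => zero_le_one) z⟩

theorem tendsto_birkhoffAverage_sum_indicator_iterate {Y : Set α}
    (hY : Tendsto (fun N => birkhoffAverage ℝ f (Y.indicator (1 : α → ℝ)) N x) atTop (𝓝 0))
    (s : Finset ℕ) :
    Tendsto (fun N =>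
      birkhoffAverage ℝ f (fun z => ∑ b ∈ s, Y.indicator (1 : α → ℝ) (f^[b] z)) N x)
      atTop (𝓝 0) := by
  simp only [birkhoffAverage_sum_iterate]
  simpa using tendsto_finsetSum s fun b _ =>
    tendsto_birkhoffAverage_iterate_apply (isBounded_range_indicator_one Y) hY b

theorem tendsto_birkhoffAverage_zero_of_small_or_near {h : α → E} {Y : Set α} {M : ℝ}
    (hM : ∀ z, ‖h z‖ ≤ M)
    (hnear : ∀ ε > 0, ∃ B : ℕ, ∀ z, ‖h z‖ ≤ ε ∨ ∃ b ≤ B, f^[b] z ∈ Y)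
    (hY : Tendsto (fun N => birkhoffAverage ℝ f (Y.indicator (1 : α → ℝ)) N x) atTop (𝓝 0)) :
    Tendsto (fun N => birkhoffAverage ℝ f h N x) atTop (𝓝 0) := by
  refine tendsto_birkhoffAverage_zero_of_norm_le fun ε hε => ?_
  obtain ⟨B, hB⟩ := hnear ε hε
  set visits : α → ℝ := fun z => ∑ b ∈ Finset.range (B + 1), Y.indicator (1 : α → ℝ) (f^[b] z)
  have term_nonneg : ∀ z b, 0 ≤ Y.indicator (1 : α → ℝ) (f^[b] z) := fun z b =>
    indicator_nonneg (fun _ _ => zero_le_one) _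
  have visits_nonneg : ∀ z, 0 ≤ visits z := fun z => Finset.sum_nonneg fun b _ => term_nonneg z b
  refine ⟨fun z => M * visits z, fun z => ?_, ?_⟩
  · have hM0 : 0 ≤ M := (norm_nonneg _).trans (hM z)
    rcases hB z with hsmall | ⟨b, hbB, hbY⟩
    · exact hsmall.trans (le_add_of_nonneg_right (mul_nonneg hM0 (visits_nonneg z)))
    · have one_le_visits : 1 ≤ visits z := by
        simpa [hbY] using Finset.single_le_sum (fun b _ => term_nonneg z b)
          (Finset.mem_range.2 (Nat.lt_succ_of_le hbB))
      nlinarith [hM z]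
  · have havg : ∀ N, birkhoffAverage ℝ f (fun z => M * visits z) N x
        = M * birkhoffAverage ℝ f visits N x := fun N =>
      (map_birkhoffAverage ℝ ℝ (AddMonoidHom.mulLeft M) f visits N x).symm
    simpa only [havg, mul_zero] using
      (tendsto_birkhoffAverage_sum_indicator_iterate hY (Finset.range (B + 1))).const_mul M

end BirkhoffAverages

section CellIndicator

variable {α ι : Type*} {Y : Set α} {C : ι → Set α}

/-- The indicator vector of a family of cells `C`: its Birkhoff averages are the vectors of
visit frequencies to the cells. -/
def cellIndicator (C : ι → Set α) (z : α) : ι → ℝ := fun i => (C i).indicator 1 z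

theorem cellIndicator_eq_zero (hcover : ⋃ i, C i = Yᶜ) {z : α} (hz : z ∈ Y) :
    cellIndicator C z = 0 := by
  have hz' : z ∉ ⋃ i, C i := by simpa [hcover] using hz
  exact funext fun i => indicator_of_notMem (fun hi => hz' (mem_iUnion_of_mem i hi)) _

theorem cellIndicator_eq_single [DecidableEq ι] (hdisj : Pairwise (Function.onFun Disjoint C))
    {i : ι} {z : α} (hz : z ∈ C i) : cellIndicator C z = Pi.single i 1 := by
  funext j
  rcases eq_or_ne j i with rfl | hji
  · simp [cellIndicator, hz]
  · simp [cellIndicator, hji, disjoint_right.1 (hdisj hji) hz]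

variable [Fintype ι]

theorem norm_cellIndicator_le_one (C : ι → Set α) (z : α) : ‖cellIndicator C z‖ ≤ 1 := by
  refine (pi_norm_le_iff_of_nonneg zero_le_one).2 fun i => ?_
  simpa [cellIndicator] using norm_indicator_le_norm_self (1 : α → ℝ) (s := C i) z

theorem indicator_add_sum_cellIndicator (hdisj : Pairwise (Function.onFun Disjoint C))
    (hcover : ⋃ i, C i = Yᶜ) (z : α) :
    Y.indicator (1 : α → ℝ) z + ∑ i, cellIndicator C z i = 1 := by
  classical
  by_cases hz : z ∈ Y
  · simp [cellIndicator_eq_zero hcover hz, hz]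
  · obtain ⟨i, hi⟩ := mem_iUnion.1 (hcover.symm ▸ hz : z ∈ ⋃ i, C i)
    simp [cellIndicator_eq_single hdisj hi, hz]

theorem birkhoffAverage_indicator_eq_one_sub (hdisj : Pairwise (Function.onFun Disjoint C))
    (hcover : ⋃ i, C i = Yᶜ) (f : α → α) (x : α) {N : ℕ} (hN : N ≠ 0) :
    birkhoffAverage ℝ f (Y.indicator (1 : α → ℝ)) N x
      = 1 - ∑ i, birkhoffAverage ℝ f (cellIndicator C) N x i := by
  have hsum : ∑ i, birkhoffAverage ℝ f (cellIndicator C) N x i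
      = birkhoffAverage ℝ f (fun z => ∑ i, cellIndicator C z i) N x := by
    simpa [Fintype.linearCombination_apply, Function.comp_def] using
      map_birkhoffAverage ℝ ℝ (Fintype.linearCombination ℝ (1 : ι → ℝ)) f (cellIndicator C) N x
  have hone : birkhoffAverage ℝ f (1 : α → ℝ) N x = 1 := by
    simp [birkhoffAverage, birkhoffSum, hN]
  have hfun : Y.indicator (1 : α → ℝ) + (fun z => ∑ i, cellIndicator C z i) = 1 :=
    funext (indicator_add_sum_cellIndicator hdisj hcover)
  rw [eq_sub_iff_add_eq, hsum, ← hone, ← congrArg (birkhoffAverage ℝ f · N x) hfun,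
    birkhoffAverage_add]
  rfl

end CellIndicator

section ReturnTimes

variable {α : Type*} {f : α → α} {Y A : Set α} {x : α}

theorem hitTime_spec (h : ∃ n, 1 ≤ n ∧ f^[n] x ∈ Y) :
    1 ≤ hitTime f Y x ∧ f^[hitTime f Y x] x ∈ Y :=
  Nat.sInf_mem h

theorem iterate_notMem_of_lt_hitTime {n : ℕ} (hn : 0 < n) (hlt : n < hitTime f Y x) :
    f^[n] x ∉ Y :=
  fun h => Nat.notMem_of_lt_sInf hlt ⟨hn, h⟩

theorem hitTime_spec_iterate (hrec : ∃ᶠ n in atTop, f^[n] x ∈ Y) (a : ℕ) :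
    1 ≤ hitTime f Y (f^[a] x) ∧ f^[hitTime f Y (f^[a] x)] (f^[a] x) ∈ Y := by
  obtain ⟨n, han, hn⟩ := frequently_atTop.1 hrec (a + 1)
  refine hitTime_spec ⟨n - a, by lia, ?_⟩
  rwa [← Function.iterate_add_apply, Nat.sub_add_cancel (by lia)]

theorem iterate_retMap (f : α → α) (Y : Set α) (k : ℕ) (x : α) :
    (retMap f Y)^[k] x = f^[tauSum f Y k x] x := by
  induction k with
  | zero => simp [tauSum]
  | succ k ih =>
    rw [Function.iterate_succ_apply', tauSum, Finset.sum_range_succ, ← tauSum, add_comm,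
      Function.iterate_add_apply, ← ih, retMap]

theorem tauSum_succ (f : α → α) (Y : Set α) (k : ℕ) (x : α) :
    tauSum f Y (k + 1) x = tauSum f Y k x + hitTime f Y (f^[tauSum f Y k x] x) := by
  rw [tauSum, Finset.sum_range_succ, iterate_retMap, tauSum]

theorem iterate_tauSum_mem (hx : x ∈ Y) (hrec : ∃ᶠ n in atTop, f^[n] x ∈ Y) (k : ℕ) :
    f^[tauSum f Y k x] x ∈ Y := by
  induction k with
  | zero => simpa [tauSum]
  | succ k _ =>
    rw [tauSum_succ, add_comm, Function.iterate_add_apply]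
    exact (hitTime_spec_iterate hrec _).2

theorem strictMono_tauSum (hrec : ∃ᶠ n in atTop, f^[n] x ∈ Y) :
    StrictMono fun k => tauSum f Y k x :=
  strictMono_nat_of_lt_succ fun k => by
    rw [tauSum_succ]
    exact Nat.lt_add_of_pos_right (hitTime_spec_iterate hrec _).1

-- `tauJ` counts over the times `1, …, τ` and the Birkhoff sum over `0, …, τ - 1`; neither of the
-- times `0` and `τ` contributes.
theorem cast_tauJ_eq_birkhoffSum (hx : x ∉ A) (hret : f^[hitTime f Y x] x ∉ A) :
    (tauJ f Y A x : ℝ) = birkhoffSum f (A.indicator 1) (hitTime f Y x) x := by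
  set u : ℕ → ℝ := fun n => A.indicator 1 (f^[n] x)
  have h0 : u 0 = 0 := indicator_of_notMem hx 1
  have hτ : u (hitTime f Y x) = 0 := indicator_of_notMem hret 1
  calc (tauJ f Y A x : ℝ) = ∑ n ∈ Finset.Icc 1 (hitTime f Y x), u n := by
        classical simp [tauJ, u, indicator_apply]
    _ = ∑ n ∈ Finset.range (hitTime f Y x), u (n + 1) := by
        rw [Finset.range_eq_Ico, Finset.sum_Ico_add' u 0 _ 1]
        rfl
    _ = ∑ n ∈ Finset.range (hitTime f Y x), u n := by
        linarith [Finset.sum_range_succ u (hitTime f Y x),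
          Finset.sum_range_succ' u (hitTime f Y x)]

theorem cast_tauJSum_eq_birkhoffSum (hA : Disjoint Y A) (hx : x ∈ Y)
    (hrec : ∃ᶠ n in atTop, f^[n] x ∈ Y) (k : ℕ) :
    (tauJSum f Y A k x : ℝ) = birkhoffSum f (A.indicator 1) (tauSum f Y k x) x := by
  induction k with
  | zero => simp [tauJSum, tauSum]
  | succ k ih =>
    have hstart := disjoint_left.1 hA (iterate_tauSum_mem hx hrec k)
    have hend := disjoint_left.1 hA (hitTime_spec_iterate hrec (tauSum f Y k x)).2
    rw [tauJSum, Finset.sum_range_succ, ← tauJSum, Nat.cast_add, ih, tauSum_succ, birkhoffSum_add,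
      iterate_retMap, cast_tauJ_eq_birkhoffSum hstart hend]

theorem tauRatio_eq_birkhoffAverage {d : ℕ} {C : Fin d → Set α} (hcover : ⋃ i, C i = Yᶜ)
    (hx : x ∈ Y) (hrec : ∃ᶠ n in atTop, f^[n] x ∈ Y) (k : ℕ) :
    tauRatio f Y C k x = birkhoffAverage ℝ f (cellIndicator C) (tauSum f Y k x) x := by
  funext i
  have hi : Disjoint Y (C i) :=
    disjoint_compl_right.mono_right (hcover ▸ subset_iUnion C i)
  rw [tauRatio, cast_tauJSum_eq_birkhoffSum hi hx hrec]
  simp [birkhoffAverage, birkhoffSum, cellIndicator, div_eq_inv_mul]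

end ReturnTimes

section Excursions

variable {α ι : Type*} {f : α → α} {Y : Set α} {x : α}

/-- An orbit cannot pass from one cell of `C` to another without entering `Y` in between. -/
def NoCrossing (f : α → α) (Y : Set α) (C : ι → Set α) : Prop :=
  ∀ z : α, ∀ n m : ℕ, ∀ i j, i ≠ j →
    f^[n] z ∈ C i → f^[n + m] z ∈ C j → ∃ k, 0 < k ∧ k < m ∧ f^[n + k] z ∈ Y

theorem NoCrossing.cellIndicator_iterate {C : ι → Set α} (hnc : NoCrossing f Y C)
    (hdisj : Pairwise (Function.onFun Disjoint C)) (hcover : ⋃ i, C i = Yᶜ)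
    {z : α} {m : ℕ} (hm : 0 < m) (hlt : m < hitTime f Y z) :
    cellIndicator C (f^[m] z) = cellIndicator C (f z) := by
  classical
  have exists_cell : ∀ k, 0 < k → k ≤ m → ∃ i, f^[k] z ∈ C i := fun k hk hkm =>
    mem_iUnion.1 (hcover.symm ▸ iterate_notMem_of_lt_hitTime hk (hkm.trans_lt hlt))
  obtain ⟨i, hi⟩ := exists_cell 1 one_pos hm
  obtain ⟨j, hj⟩ := exists_cell m hm le_rfl
  have hij : i = j := by
    by_contra hne
    obtain ⟨k, -, hkm, hkY⟩ := hnc z 1 (m - 1) i j hne hi (by rwa [Nat.add_sub_cancel' hm])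
    exact iterate_notMem_of_lt_hitTime (by lia) (by lia) hkY
  rw [cellIndicator_eq_single hdisj hj, cellIndicator_eq_single hdisj (hij ▸ hi)]

theorem NoCrossing.norm_birkhoffSum_sub_smul_le [Fintype ι] {C : ι → Set α}
    (hnc : NoCrossing f Y C) (hdisj : Pairwise (Function.onFun Disjoint C))
    (hcover : ⋃ i, C i = Yᶜ) {z : α} (hz : z ∈ Y) {m : ℕ} (hm : m ≤ hitTime f Y z) :
    ‖birkhoffSum f (cellIndicator C) m z - (m : ℝ) • cellIndicator C (f z)‖ ≤ 1 := by
  cases m with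
  | zero => simp
  | succ m =>
    have hsum : birkhoffSum f (cellIndicator C) (m + 1) z = (m : ℝ) • cellIndicator C (f z) := by
      have hconst : ∀ k ∈ Finset.range m,
          cellIndicator C (f^[k] (f z)) = cellIndicator C (f z) := fun k hk =>
        hnc.cellIndicator_iterate hdisj hcover k.succ_pos
          (lt_of_lt_of_le (by simpa using hk) hm)
      rw [birkhoffSum_succ', cellIndicator_eq_zero hcover hz, zero_add, birkhoffSum,
        Finset.sum_congr rfl hconst]
      simp [Nat.cast_smul_eq_nsmul]
    rw [hsum, ← sub_smul]
    simpa using norm_cellIndicator_le_one C (f z)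

theorem NoCrossing.norm_birkhoffAverage_sub_tauRatio_le {d : ℕ} {C : Fin d → Set α}
    (hnc : NoCrossing f Y C) (hdisj : Pairwise (Function.onFun Disjoint C))
    (hcover : ⋃ i, C i = Yᶜ) (hx : x ∈ Y) (hrec : ∃ᶠ n in atTop, f^[n] x ∈ Y) {k N : ℕ}
    (hlt : tauSum f Y k x < N) (hle : N ≤ tauSum f Y (k + 1) x) :
    ‖birkhoffAverage ℝ f (cellIndicator C) N x - tauRatio f Y C k x‖
      ≤ ‖tauRatio f Y C (k + 1) x - tauRatio f Y C k x‖ + 2 / N := by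
  obtain ⟨m, rfl⟩ := Nat.exists_eq_add_of_le hlt.le
  rw [tauSum_succ] at hle
  have hsum := fun l (hl : l ≤ hitTime f Y (f^[tauSum f Y k x] x)) =>
    hnc.norm_birkhoffSum_sub_smul_le hdisj hcover (iterate_tauSum_mem hx hrec k) hl
  simp only [tauRatio_eq_birkhoffAverage hcover hx hrec, tauSum_succ]
  simpa using norm_birkhoffAverage_add_sub_le hsum (by lia) (Nat.add_le_add_iff_left.1 hle)

theorem NoCrossing.exists_tendsto_birkhoffAverage_sub_tauRatio {d : ℕ} {C : Fin d → Set α}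
    (hnc : NoCrossing f Y C) (hdisj : Pairwise (Function.onFun Disjoint C))
    (hcover : ⋃ i, C i = Yᶜ) (hx : x ∈ Y) (hrec : ∃ᶠ n in atTop, f^[n] x ∈ Y)
    (hdiff : Tendsto (fun k => ‖tauRatio f Y C (k + 1) x - tauRatio f Y C k x‖) atTop (𝓝 0)) :
    ∃ κ : ℕ → ℕ, Tendsto κ atTop atTop ∧
      Tendsto (fun N => birkhoffAverage ℝ f (cellIndicator C) N x - tauRatio f Y C (κ N) x)
        atTop (𝓝 0) := by
  have hmono := strictMono_tauSum hrec
  have exists_between : ∀ N, 0 < N → ∃ k, tauSum f Y k x < N ∧ N ≤ tauSum f Y (k + 1) x :=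
    fun N hN => hmono.exists_between_of_tendsto_atTop hmono.tendsto_atTop (by simpa [tauSum])
  choose! κ hκ_lt hκ_le using exists_between
  have hκ : Tendsto κ atTop atTop := by
    refine tendsto_atTop.2 fun K => ?_
    filter_upwards [eventually_gt_atTop (tauSum f Y K x)] with N hN
    exact Nat.lt_succ_iff.1 (hmono.lt_iff_lt.1 (hN.trans_le (hκ_le N (by lia))))
  have hbound : Tendsto (fun N : ℕ =>
      ‖tauRatio f Y C (κ N + 1) x - tauRatio f Y C (κ N) x‖ + 2 / N) atTop (𝓝 0) := by
    simpa using (hdiff.comp hκ).add (tendsto_const_div_atTop_nhds_zero_nat 2)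
  refine ⟨κ, hκ, squeeze_zero_norm' ?_ hbound⟩
  filter_upwards [eventually_gt_atTop 0] with N hN
  exact hnc.norm_birkhoffAverage_sub_tauRatio_le hdisj hcover hx hrec (hκ_lt N hN) (hκ_le N hN)

end Excursions

section LimitPoints

variable {E : Type*} [TopologicalSpace E] {u v : ℕ → E} {p : E}

theorem mapClusterPt_add_one_iff :
    MapClusterPt p atTop (fun k => u (k + 1)) ↔ MapClusterPt p atTop u := by
  rw [← Function.comp_def u (· + 1), mapClusterPt_comp, map_add_atTop_eq_nat]

theorem mapClusterPt_iff_exists_strictMono_tendsto [FirstCountableTopology E] :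
    MapClusterPt p atTop u ↔ ∃ φ : ℕ → ℕ, StrictMono φ ∧ Tendsto (u ∘ φ) atTop (𝓝 p) :=
  ⟨fun h => h.tendsto_subseq, fun ⟨_, hφ, hlim⟩ => hlim.mapClusterPt.of_comp hφ.tendsto_atTop⟩

theorem mapClusterPt_iff_of_tendsto_sub [AddGroup E] [IsTopologicalAddGroup E] {τ κ : ℕ → ℕ}
    (hτ : Tendsto τ atTop atTop) (hκ : Tendsto κ atTop atTop) (hv : v = u ∘ τ)
    (hclose : Tendsto (fun N => u N - v (κ N)) atTop (𝓝 0)) :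
    MapClusterPt p atTop u ↔ MapClusterPt p atTop v := by
  refine ⟨fun hp => ?_, fun hp => .of_comp hτ (hv ▸ hp)⟩
  obtain ⟨U, hU, hlim⟩ := mapClusterPt_iff_ultrafilter.1 hp
  refine .of_comp hκ (.mono (F := U) (Tendsto.mapClusterPt ?_) hU)
  simpa [Function.comp_def] using (hclose.mono_left hU).neg.add hlim

theorem tendsto_of_forall_mapClusterPt {F : Type*} [TopologicalSpace F] {K : Set E}
    (hK : IsCompact K) (hu : ∀ n, u n ∈ K) {g : E → F} (hg : Continuous g) {c : F}
    (hc : ∀ p, MapClusterPt p atTop u → g p = c) : Tendsto (g ∘ u) atTop (𝓝 c) := by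
  refine (tendsto_iff_ultrafilter _ _ _).2 fun U hU => ?_
  obtain ⟨p, -, hp⟩ := hK.ultrafilter_le_nhds (U.map u) (tendsto_principal.2 (.of_forall hu))
  rw [← hc p (mapClusterPt_iff_ultrafilter.2 ⟨U, hU, hp⟩)]
  exact (hg.tendsto p).comp hp

end LimitPoints

section OccupationFrequencies

variable {α ι : Type*} [Fintype ι] {f : α → α} {Y : Set α} {x : α}

theorem norm_birkhoffAverage_cellIndicator_le_one (f : α → α) (C : ι → Set α) (N : ℕ) (x : α) :
    ‖birkhoffAverage ℝ f (cellIndicator C) N x‖ ≤ 1 := by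
  have hle : ∀ z, ‖cellIndicator C z‖ ≤ 1 + (0 : α → ℝ) z := by
    simpa using norm_cellIndicator_le_one C
  simpa [birkhoffAverage, birkhoffSum] using norm_birkhoffAverage_le zero_le_one hle N x

theorem norm_linearCombination_cellIndicator_le {E : Type*} [NormedAddCommGroup E]
    [NormedSpace ℝ E] (C : ι → Set α) (w : ι → E) (z : α) :
    ‖Fintype.linearCombination ℝ w (cellIndicator C z)‖ ≤ ∑ i, ‖w i‖ := by
  rw [Fintype.linearCombination_apply]
  refine norm_sum_le_of_le _ fun i _ => ?_
  rw [norm_smul]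
  exact mul_le_of_le_one_left (norm_nonneg _)
    ((norm_le_pi_norm _ i).trans (norm_cellIndicator_le_one C z))

theorem tendsto_birkhoffAverage_indicator_zero {C : ι → Set α}
    (hdisj : Pairwise (Function.onFun Disjoint C)) (hcover : ⋃ i, C i = Yᶜ)
    (hsum : ∀ p, MapClusterPt p atTop (fun N => birkhoffAverage ℝ f (cellIndicator C) N x) →
      ∑ i, p i = 1) :
    Tendsto (fun N => birkhoffAverage ℝ f (Y.indicator (1 : α → ℝ)) N x) atTop (𝓝 0) := by
  have htotal := tendsto_of_forall_mapClusterPt (isCompact_closedBall (0 : ι → ℝ) 1)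
    (fun N => mem_closedBall_zero_iff.2 (norm_birkhoffAverage_cellIndicator_le_one f C N x))
    (by fun_prop : Continuous fun p : ι → ℝ => ∑ i, p i) hsum
  have hcompl := htotal.const_sub 1
  rw [sub_self] at hcompl
  refine hcompl.congr' ?_
  filter_upwards [eventually_ne_atTop 0] with N hN
  exact (birkhoffAverage_indicator_eq_one_sub hdisj hcover f x hN).symm

theorem mem_Tset_iff_mapClusterPt {d : ℕ} {C : Fin d → Set α} {p : Fin d → ℝ} :
    p ∈ Tset f Y C x ↔ MapClusterPt p atTop fun k => tauRatio f Y C k x := by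
  rw [← mapClusterPt_add_one_iff, mapClusterPt_iff_exists_strictMono_tendsto]
  rfl

theorem NoCrossing.mem_Tset_iff {d : ℕ} {C : Fin d → Set α} (hnc : NoCrossing f Y C)
    (hdisj : Pairwise (Function.onFun Disjoint C)) (hcover : ⋃ i, C i = Yᶜ) (hx : x ∈ Y)
    (hrec : ∃ᶠ n in atTop, f^[n] x ∈ Y)
    (hdiff : Tendsto (fun k => ‖tauRatio f Y C (k + 1) x - tauRatio f Y C k x‖) atTop (𝓝 0))
    {p : Fin d → ℝ} :
    p ∈ Tset f Y C x ↔
      MapClusterPt p atTop fun N => birkhoffAverage ℝ f (cellIndicator C) N x := by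
  obtain ⟨κ, hκ, hclose⟩ :=
    hnc.exists_tendsto_birkhoffAverage_sub_tauRatio hdisj hcover hx hrec hdiff
  rw [mem_Tset_iff_mapClusterPt]
  exact (mapClusterPt_iff_of_tendsto_sub (strictMono_tauSum hrec).tendsto_atTop hκ
    (funext (tauRatio_eq_birkhoffAverage hcover hx hrec)) hclose).symm

end OccupationFrequencies

section StepApproximation

variable {α ι E : Type*} [TopologicalSpace α] {f : α → α} {Y : Set α} {ξ : ι → α}

/-- The hit times of `Y` are bounded outside `Y` on every compact set avoiding the points `ξ`. -/
def BoundedHitTimes (f : α → α) (Y : Set α) (ξ : ι → α) : Prop :=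
  ∀ K : Set α, IsCompact K → (∀ j, ξ j ∉ K) →
    ∃ B : ℕ, ∀ z ∈ K \ Y, ∃ n, 1 ≤ n ∧ n ≤ B ∧ f^[n] z ∈ Y

variable [NormedAddCommGroup E] [NormedSpace ℝ E] [Fintype ι] {C : ι → Set α}

theorem BoundedHitTimes.exists_norm_sub_linearCombination_le_or_near [CompactSpace α]
    (hbd : BoundedHitTimes f Y ξ) (hdisj : Pairwise (Function.onFun Disjoint C))
    (hξ : ∀ i, ξ i ∈ interior (C i)) {g : α → E} (hg : Continuous g) {ε : ℝ} (hε : 0 < ε) :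
    ∃ B : ℕ, ∀ z,
      ‖g z - Fintype.linearCombination ℝ (g ∘ ξ) (cellIndicator C z)‖ ≤ ε
        ∨ ∃ b ≤ B, f^[b] z ∈ Y := by
  classical
  set U : ι → Set α := fun i => interior (C i) ∩ {z | ‖g z - g (ξ i)‖ < ε}
  have hU : IsOpen (⋃ i, U i) := isOpen_iUnion fun i =>
    isOpen_interior.inter (isOpen_lt (by fun_prop) continuous_const)
  have hξU : ∀ i, ξ i ∉ (⋃ i, U i)ᶜ := fun i =>
    notMem_compl_iff.2 (mem_iUnion_of_mem i ⟨hξ i, by simpa using hε⟩)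
  obtain ⟨B, hB⟩ := hbd _ hU.isClosed_compl.isCompact hξU
  refine ⟨B, fun z => ?_⟩
  by_cases hzU : z ∈ ⋃ i, U i
  · obtain ⟨i, hzC, hzε⟩ := mem_iUnion.1 hzU
    left
    rw [cellIndicator_eq_single hdisj (interior_subset hzC),
      Fintype.linearCombination_apply_single, one_smul]
    exact hzε.le
  · right
    by_cases hzY : z ∈ Y
    · exact ⟨0, B.zero_le, hzY⟩
    · obtain ⟨n, -, hn⟩ := hB z ⟨hzU, hzY⟩
      exact ⟨n, hn⟩

open scoped BoundedContinuousFunction in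
theorem BoundedHitTimes.tendsto_birkhoffAverage_sub_linearCombination [CompactSpace α]
    (hbd : BoundedHitTimes f Y ξ) (hdisj : Pairwise (Function.onFun Disjoint C))
    (hξ : ∀ i, ξ i ∈ interior (C i)) {x : α}
    (hY : Tendsto (fun N => birkhoffAverage ℝ f (Y.indicator (1 : α → ℝ)) N x) atTop (𝓝 0))
    (g : α →ᵇ E) :
    Tendsto (fun N => birkhoffAverage ℝ f g N x
      - Fintype.linearCombination ℝ (g ∘ ξ) (birkhoffAverage ℝ f (cellIndicator C) N x))
      atTop (𝓝 0) := by
  set step : α → E := fun z => Fintype.linearCombination ℝ (g ∘ ξ) (cellIndicator C z)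
  have hbound : ∀ z, ‖g z - step z‖ ≤ ‖g‖ + ∑ i, ‖g (ξ i)‖ := fun z =>
    (norm_sub_le _ _).trans (add_le_add (g.norm_coe_le_norm z)
      (norm_linearCombination_cellIndicator_le C _ z))
  have hlim := tendsto_birkhoffAverage_zero_of_small_or_near hbound
    (fun ε hε => hbd.exists_norm_sub_linearCombination_le_or_near hdisj hξ g.continuous hε) hY
  refine hlim.congr fun N => ?_
  rw [map_birkhoffAverage ℝ ℝ]
  simp only [birkhoffAverage, birkhoffSum, Finset.sum_sub_distrib, smul_sub]
  rfl

end StepApproximation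

section WeakLimits

variable {Ω : Type*} [MeasurableSpace Ω]

theorem integral_empMeasure [MeasurableSingletonClass Ω] {E : Type*} [NormedAddCommGroup E]
    [NormedSpace ℝ E] [CompleteSpace E] (f : Ω → Ω) (g : Ω → E) (n : ℕ) (x : Ω) :
    ∫ y, g y ∂(empMeasure f n x) = birkhoffAverage ℝ f g n x := by
  rw [empMeasure, integral_smul_measure,
    integral_finsetSum_measure fun k _ => integrable_dirac enorm_lt_top]
  simp [birkhoffAverage, birkhoffSum]

theorem integral_nuMeasure [MeasurableSingletonClass Ω] {E : Type*} [NormedAddCommGroup E]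
    [NormedSpace ℝ E] [CompleteSpace E] {d : ℕ} (ξ : Fin d → Ω) {p : Fin d → ℝ} (hp : 0 ≤ p)
    (g : Ω → E) :
    ∫ y, g y ∂(nuMeasure ξ p) = Fintype.linearCombination ℝ (g ∘ ξ) p := by
  rw [nuMeasure, integral_finsetSum_measure fun j _ =>
    (integrable_dirac enorm_lt_top).smul_measure ENNReal.ofReal_ne_top]
  simp [integral_smul_measure, ENNReal.toReal_ofReal (hp _), Fintype.linearCombination_apply]

theorem isProbabilityMeasure_nuMeasure {d : ℕ} (ξ : Fin d → Ω) {p : Fin d → ℝ}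
    (hp : p ∈ simplexS d) : IsProbabilityMeasure (nuMeasure ξ p) := by
  refine ⟨?_⟩
  simp [nuMeasure, ← ENNReal.ofReal_sum_of_nonneg fun j _ => (hp.1 j).1, hp.2]

variable [MetricSpace Ω] [BorelSpace Ω]

-- The constant test function `1` excludes limits of infinite mass, whose integrals are all `0`.
theorem WeakTendsto.unique {μ : ℕ → Measure Ω} {ν ν' : Measure Ω} [IsFiniteMeasure ν'] [NeZero ν']
    (h : WeakTendsto μ ν) (h' : WeakTendsto μ ν') : ν = ν' := by
  have integral_eq := fun g => tendsto_nhds_unique (h g) (h' g)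
  have mass_eq : ν.real univ = ν'.real univ := by
    simpa using integral_eq (BoundedContinuousFunction.const Ω 1)
  have : IsFiniteMeasure ν := by
    refine ⟨lt_top_iff_ne_top.2 fun htop => ?_⟩
    have hzero : ν'.real univ = 0 := by rw [← mass_eq, Measure.real, htop, ENNReal.toReal_top]
    exact measureReal_univ_ne_zero hzero
  exact ext_of_forall_integral_eq_of_IsFiniteMeasure integral_eq

variable [CompactSpace Ω] {f : Ω → Ω} {Y : Set Ω} {x : Ω} {d : ℕ} {ξ : Fin d → Ω}
  {C : Fin d → Set Ω}

theorem BoundedHitTimes.weakTendsto_empMeasure (hbd : BoundedHitTimes f Y ξ)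
    (hdisj : Pairwise (Function.onFun Disjoint C)) (hξ : ∀ i, ξ i ∈ interior (C i))
    (hY : Tendsto (fun N => birkhoffAverage ℝ f (Y.indicator (1 : Ω → ℝ)) N x) atTop (𝓝 0))
    {u : ℕ → ℕ} (hu : Tendsto u atTop atTop) {p : Fin d → ℝ} (hp : 0 ≤ p)
    (hlim : Tendsto (fun n => birkhoffAverage ℝ f (cellIndicator C) (u n) x) atTop (𝓝 p)) :
    WeakTendsto (fun n => empMeasure f (u n) x) (nuMeasure ξ p) := by
  intro g
  simp only [integral_empMeasure, integral_nuMeasure ξ hp]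
  have hstep := ((Fintype.linearCombination ℝ (g ∘ ξ)).continuous_of_finiteDimensional.tendsto
    p).comp hlim
  simpa [Function.comp_def] using
    ((hbd.tendsto_birkhoffAverage_sub_linearCombination hdisj hξ hY g).comp hu).add hstep

theorem BoundedHitTimes.Vset_eq_image (hbd : BoundedHitTimes f Y ξ)
    (hdisj : Pairwise (Function.onFun Disjoint C)) (hξ : ∀ i, ξ i ∈ interior (C i))
    (hY : Tendsto (fun N => birkhoffAverage ℝ f (Y.indicator (1 : Ω → ℝ)) N x) atTop (𝓝 0))
    (hsimplex : ∀ p, MapClusterPt p atTop (fun N => birkhoffAverage ℝ f (cellIndicator C) N x) →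
      p ∈ simplexS d) :
    Vset f x = nuMeasure ξ ''
      {p | MapClusterPt p atTop fun N => birkhoffAverage ℝ f (cellIndicator C) N x} := by
  have weak_limit : ∀ (u : ℕ → ℕ) (p : Fin d → ℝ), Tendsto u atTop atTop → p ∈ simplexS d →
      Tendsto (fun n => birkhoffAverage ℝ f (cellIndicator C) (u n) x) atTop (𝓝 p) →
      WeakTendsto (fun n => empMeasure f (u n) x) (nuMeasure ξ p) := fun u p hu hp hlim =>
    hbd.weakTendsto_empMeasure hdisj hξ hY hu (fun i => (hp.1 i).1) hlim
  ext ν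
  constructor
  · rintro ⟨φ, hφ, hν⟩
    have hφ' : Tendsto (fun n => φ n + 1) atTop atTop :=
      (tendsto_add_atTop_nat 1).comp hφ.tendsto_atTop
    obtain ⟨p, -, ψ, hψ, hlim⟩ := (isCompact_closedBall (0 : Fin d → ℝ) 1).tendsto_subseq
      (x := fun n => birkhoffAverage ℝ f (cellIndicator C) (φ n + 1) x)
      fun n => mem_closedBall_zero_iff.2 (norm_birkhoffAverage_cellIndicator_le_one f C _ x)
    have hsub := hφ'.comp hψ.tendsto_atTop
    have hcluster := MapClusterPt.of_comp (u := fun N => birkhoffAverage ℝ f (cellIndicator C) N x)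
      hsub hlim.mapClusterPt
    have := isProbabilityMeasure_nuMeasure ξ (hsimplex p hcluster)
    have hν' : WeakTendsto (fun n => empMeasure f (φ (ψ n) + 1) x) ν := fun g =>
      (hν g).comp hψ.tendsto_atTop
    exact ⟨p, hcluster, (hν'.unique (weak_limit _ p hsub (hsimplex p hcluster) hlim)).symm⟩
  · rintro ⟨p, hp, rfl⟩
    obtain ⟨φ, hφ, hlim⟩ := (mapClusterPt_add_one_iff.2 hp).tendsto_subseq
    exact ⟨φ, hφ, weak_limit _ p ((tendsto_add_atTop_nat 1).comp hφ.tendsto_atTop)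
      (hsimplex p hp) hlim⟩

end WeakLimits

theorem stmt4_general (f : X → X) (Y : Set X) (d : ℕ) (ξ : Fin d → X) (Xp : Fin d → Set X)
    (hXd : Pairwise (Function.onFun Disjoint Xp)) (hXU : (⋃ j, Xp j) = Yᶜ)
    (hξint : ∀ j, ξ j ∈ interior (Xp j)) (hnc : NoCrossing f Y Xp) (hbd : BoundedHitTimes f Y ξ)
    (x : X) (hxY : x ∈ Y) (hxrec : ∃ᶠ n in atTop, f^[n] x ∈ Y)
    (hT : Tset f Y Xp x ⊆ simplexS d)
    (hdiff : Tendsto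
      (fun k => ‖tauRatio f Y Xp (k + 1) x - tauRatio f Y Xp (k + 2) x‖) atTop (𝓝 0)) :
    Vset f x = nuMeasure ξ '' Tset f Y Xp x := by
  have hdiff' : Tendsto (fun k => ‖tauRatio f Y Xp (k + 1) x - tauRatio f Y Xp k x‖)
      atTop (𝓝 0) :=
    (tendsto_add_atTop_iff_nat 1).1 (hdiff.congr fun k => norm_sub_rev _ _)
  have hTset : Tset f Y Xp x =
      {p | MapClusterPt p atTop fun N => birkhoffAverage ℝ f (cellIndicator Xp) N x} :=
    ext fun _ => hnc.mem_Tset_iff hXd hXU hxY hxrec hdiff'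
  rw [hTset] at hT ⊢
  have hY := tendsto_birkhoffAverage_indicator_zero hXd hXU fun p hp => (hT hp).2
  exact hbd.Vset_eq_image hXd hξint hY hT

/-- If `T(x)` is a closed connected subset of `S` and consecutive return-time
ratios become asymptotically close, then `V(x) = πT(x)`. -/
theorem stmt4 (f : X → X) (hf : Measurable f)
    (Y : Set X) (hYc : IsCompact Y)
    (d : ℕ) (hd : 1 ≤ d) (ξ : Fin d → X) (hξ : Function.Injective ξ)
    (hξY : ∀ j, ξ j ∉ Y)
    (Xp : Fin d → Set X) (hXm : ∀ j, MeasurableSet (Xp j))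
    (hXd : Pairwise (Function.onFun Disjoint Xp))
    (hXU : (⋃ j, Xp j) = Yᶜ)
    (hξint : ∀ j, ξ j ∈ interior (Xp j))
    (hξcl : ∀ i j, i ≠ j → ξ i ∉ closure (Xp j))
    (hnc : ∀ z : X, ∀ n m : ℕ, ∀ i j, i ≠ j →
      f^[n] z ∈ Xp i → f^[n + m] z ∈ Xp j → ∃ k, 0 < k ∧ k < m ∧ f^[n + k] z ∈ Y)
    (hbd : ∀ K : Set X, IsCompact K → (∀ j, ξ j ∉ K) →
      ∃ B : ℕ, ∀ z ∈ K \ Y, ∃ n, 1 ≤ n ∧ n ≤ B ∧ f^[n] z ∈ Y)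
    (x : X) (hxY : x ∈ Y) (hxrec : ∀ N : ℕ, ∃ n, N ≤ n ∧ 1 ≤ n ∧ f^[n] x ∈ Y)
    (hT1 : IsClosed (Tset f Y Xp x)) (hT2 : IsConnected (Tset f Y Xp x))
    (hT3 : Tset f Y Xp x ⊆ simplexS d)
    (hdiff : Tendsto
      (fun k => ‖tauRatio f Y Xp (k + 1) x - tauRatio f Y Xp (k + 2) x‖) atTop (𝓝 0)) :
    Vset f x = {ν | ∃ p ∈ Tset f Y Xp x, ν = nuMeasure ξ p} := by
  simpa only [image, eq_comm] using stmt4_general f Y d ξ Xp hXd hXU hξint hnc hbd x hxY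
    (frequently_atTop.2 fun N => (hxrec N).imp fun _ hn => ⟨hn.1, hn.2.2⟩) hT3 hdiff
end
end

section
/- The following are equivalent: (i) e_n(x)(K) → 0 as n → ∞ for every compact set K ⊆ X with K ∩ {ξ₁,…,ξ_d} = ∅; (ii) τ_k(x)/k → ∞ as k → ∞. -/
open MeasureTheory Filter Topology Set
open scoped ENNReal

noncomputable section

variable {X : Type*} [MetricSpace X] [CompactSpace X] [MeasurableSpace X] [BorelSpace X]

/-! By definition `e_n(x)(S)` is the proportion of times `m < n` at which the orbit of `x` visits
`S`, so it tends to `0` iff the set of visit times has natural density zero. Counting time `0` as a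
visit, the `k`-th visit time to `Y` is `τ_k(x)`, and since `Nat.count` inverts `Nat.nth`, a set of
times has density zero iff its `k`-th element grows superlinearly in `k`. This settles `K = Y`. For
any other compact `K` avoiding the `ξ_j`, each visit to `K` is followed within a bounded time `B` by
a visit to `Y`, so up to a bounded error `K` is visited at most `B + 1` times as often as `Y`. -/

section Density

open Asymptotics

/-- The set `A` has natural density zero: `|A ∩ [0, n)| = o(n)`. This is what `e_n(x)(S) → 0` says
about the times at which the orbit of `x` visits `S`. -/
def HasDensityZero (A : Set ℕ) : Prop :=
  open scoped Classical in
  (fun n : ℕ => (Nat.count (· ∈ A) n : ℝ)) =o[atTop] fun n : ℕ => (n : ℝ)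

variable {A C : Set ℕ}

theorem count_le_mul_of_forall_exists_add_mem [DecidablePred (· ∈ A)] [DecidablePred (· ∈ C)]
    {B : ℕ} (h : ∀ m ∈ C, ∃ i ≤ B, m + i ∈ A) (n : ℕ) :
    Nat.count (· ∈ C) n ≤ (B + 1) * (Nat.count (· ∈ A) n + B) := by
  let hits := {a ∈ Finset.range (n + B) | a ∈ A}
  have hsub : {m ∈ Finset.range n | m ∈ C} ⊆
      (Finset.range (B + 1) ×ˢ hits).image fun ia => ia.2 - ia.1 := by
    intro m hm
    obtain ⟨hmn, hmC⟩ := Finset.mem_filter.1 hm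
    obtain ⟨i, hiB, hiA⟩ := h m hmC
    have hhit : m + i ∈ hits :=
      Finset.mem_filter.2
        ⟨Finset.mem_range.2 (add_lt_add_of_lt_of_le (Finset.mem_range.1 hmn) hiB), hiA⟩
    exact Finset.mem_image.2 ⟨(i, m + i),
      Finset.mk_mem_product (Finset.mem_range_succ_iff.2 hiB) hhit, Nat.add_sub_cancel ..⟩
  calc Nat.count (· ∈ C) n
      ≤ ((Finset.range (B + 1) ×ˢ hits).image fun ia => ia.2 - ia.1).card := by
        rw [Nat.count_eq_card_filter_range]
        exact Finset.card_le_card hsub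
    _ ≤ (Finset.range (B + 1) ×ˢ hits).card := Finset.card_image_le
    _ = (B + 1) * Nat.count (· ∈ A) (n + B) := by
        rw [Finset.card_product, Finset.card_range, Nat.count_eq_card_filter_range]
    _ ≤ (B + 1) * (Nat.count (· ∈ A) n + B) := by
        rw [Nat.count_add]
        gcongr
        exact Nat.count_le _

theorem HasDensityZero.of_forall_exists_add_mem (hA : HasDensityZero A) {B : ℕ}
    (h : ∀ m ∈ C, ∃ i ≤ B, m + i ∈ A) : HasDensityZero C := by
  classical
  have hconst : (fun _ : ℕ => (B : ℝ)) =o[atTop] fun n : ℕ => (n : ℝ) :=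
    (isLittleO_const_id_atTop (B : ℝ)).natCast_atTop
  refine IsBigO.trans_isLittleO (.of_bound (B + 1) (.of_forall fun n => ?_)) (hA.add hconst)
  rw [Real.norm_of_nonneg (by positivity), Real.norm_of_nonneg (by positivity)]
  exact_mod_cast count_le_mul_of_forall_exists_add_mem h n

theorem hasDensityZero_insert_zero_iff (hA : A.Nonempty) :
    HasDensityZero (insert 0 A) ↔ HasDensityZero A := by
  obtain ⟨a, ha⟩ := hA
  refine ⟨fun h => h.of_forall_exists_add_mem (B := 0) fun m hm => ⟨0, le_rfl, .inr hm⟩,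
    fun h => h.of_forall_exists_add_mem (B := a) fun m hm => ?_⟩
  rcases hm with rfl | hm
  · exact ⟨a, le_rfl, by rwa [zero_add]⟩
  · exact ⟨0, a.zero_le, hm⟩

theorem hasDensityZero_iff_isLittleO_nth (hA : A.Infinite) :
    HasDensityZero A ↔ (fun k : ℕ => (k : ℝ)) =o[atTop] fun k => (Nat.nth (· ∈ A) k : ℝ) := by
  classical
  refine ⟨fun h => ?_, fun h => ?_⟩
  · simpa only [Function.comp_def, Nat.count_nth_of_infinite (p := (· ∈ A)) hA]
      using h.comp_tendsto (Nat.nth_strictMono (p := (· ∈ A)) hA).tendsto_atTop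
  · let c : ℕ → ℕ := Nat.count (· ∈ A)
    have hc : Tendsto c atTop atTop :=
      tendsto_atTop_atTop_of_monotone (Nat.count_monotone _) fun k =>
        ⟨Nat.nth (· ∈ A) k, (Nat.count_nth_of_infinite (p := (· ∈ A)) hA k).ge⟩
    calc (fun n => (c n : ℝ))
        =O[atTop] fun n => ((c n - 1 : ℕ) : ℝ) := .of_bound 2 <| by
          filter_upwards [hc.eventually_ge_atTop 2] with n hn
          rw [Real.norm_natCast, Real.norm_natCast]
          exact_mod_cast (by omega : c n ≤ 2 * (c n - 1))
      _ =o[atTop] fun n => (Nat.nth (· ∈ A) (c n - 1) : ℝ) :=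
          h.comp_tendsto ((tendsto_sub_atTop_nat 1).comp hc)
      _ =O[atTop] fun n => (n : ℝ) := .of_norm_eventuallyLE <| by
          filter_upwards [hc.eventually_ge_atTop 1] with n hn
          rw [Real.norm_natCast]
          exact_mod_cast (Nat.nth_lt_of_lt_count (Nat.sub_lt hn one_pos)).le

theorem isLittleO_iff_tendsto_div_atTop {β : Type*} {l : Filter β} {u v : β → ℝ}
    (hu : ∀ᶠ b in l, 0 < u b) (hv : ∀ᶠ b in l, 0 < v b) :
    u =o[l] v ↔ Tendsto (fun b => v b / u b) l atTop := by
  refine ⟨fun h => ?_, .of_tendsto_div_atTop⟩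
  have hpos : ∀ᶠ b in l, u b / v b ∈ Ioi 0 := by
    filter_upwards [hu, hv] with b hub hvb using div_pos hub hvb
  simpa only [Pi.inv_def, inv_div] using
    (tendsto_nhdsWithin_iff.2 ⟨h.tendsto_div_nhds_zero, hpos⟩).inv_tendsto_nhdsGT_zero

theorem hasDensityZero_iff_tendsto_nth_div (hA : A.Infinite) :
    HasDensityZero A ↔ Tendsto (fun k : ℕ => (Nat.nth (· ∈ A) k : ℝ) / k) atTop atTop := by
  have hpos : ∀ᶠ k : ℕ in atTop, (0 : ℝ) < k :=
    tendsto_natCast_atTop_atTop.eventually_gt_atTop 0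
  have hnth : ∀ᶠ k in atTop, (0 : ℝ) < Nat.nth (· ∈ A) k :=
    (tendsto_natCast_atTop_atTop.comp (Nat.nth_strictMono hA).tendsto_atTop).eventually_gt_atTop 0
  rw [hasDensityZero_iff_isLittleO_nth hA, isLittleO_iff_tendsto_div_atTop hpos hnth]

end Density

section Visits

/-- The times `m ≥ 0` at which the orbit of `x` under `f` visits `S`; their asymptotic frequency is
what the empirical measures record. -/
def visitTimes {α : Type*} (f : α → α) (S : Set α) (x : α) : Set ℕ :=
  {m | f^[m] x ∈ S}

variable {α : Type*} {f : α → α} {S Y : Set α} {x : α}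

theorem add_mem_visitTimes {m n : ℕ} :
    m + n ∈ visitTimes f S x ↔ f^[n] (f^[m] x) ∈ S := by
  rw [visitTimes, mem_ofPred_eq, add_comm, Function.iterate_add_apply]

/-- The `k`-th time at which the orbit of `x` visits `Y`, where time `0` is always counted, as
visit number `0`. With this convention `τ_k(x)` is the `k`-th visit time. -/
def nthVisit (f : α → α) (Y : Set α) (x : α) : ℕ → ℕ :=
  Nat.nth (· ∈ insert 0 (visitTimes f Y x))

theorem nthVisit_zero : nthVisit f Y x 0 = 0 :=
  Nat.nth_zero_of_zero (mem_insert _ _)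

theorem nthVisit_strictMono (hx : (visitTimes f Y x).Infinite) : StrictMono (nthVisit f Y x) :=
  Nat.nth_strictMono (hx.mono (subset_insert 0 _))

theorem hitTime_iterate_nthVisit (hx : (visitTimes f Y x).Infinite) (k : ℕ) :
    hitTime f Y (f^[nthVisit f Y x k] x) = nthVisit f Y x (k + 1) - nthVisit f Y x k := by
  have hlt : nthVisit f Y x k < nthVisit f Y x (k + 1) := nthVisit_strictMono hx k.lt_succ_self
  refine IsLeast.csInf_eq ⟨⟨Nat.sub_pos_of_lt hlt, ?_⟩, fun n ⟨hn, hnY⟩ => ?_⟩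
  · have hmem : nthVisit f Y x (k + 1) ∈ insert 0 (visitTimes f Y x) :=
      Nat.nth_mem_of_infinite (hx.mono (subset_insert 0 _)) (k + 1)
    rw [← add_mem_visitTimes, Nat.add_sub_cancel' hlt.le]
    exact hmem.resolve_left (Nat.ne_zero_of_lt hlt)
  · have hmem : nthVisit f Y x k + n ∈ insert 0 (visitTimes f Y x) :=
      .inr (add_mem_visitTimes.2 hnY)
    by_contra! hn_lt
    have hle : nthVisit f Y x k + n ≤ nthVisit f Y x k :=
      Nat.le_nth_of_lt_nth_succ (Nat.add_lt_of_lt_sub' hn_lt) hmem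
    omega

theorem retMap_iterate (hx : (visitTimes f Y x).Infinite) (k : ℕ) :
    (retMap f Y)^[k] x = f^[nthVisit f Y x k] x := by
  induction k with
  | zero => rw [nthVisit_zero, Function.iterate_zero, Function.iterate_zero]
  | succ k ih =>
    have hle : nthVisit f Y x k ≤ nthVisit f Y x (k + 1) :=
      (nthVisit_strictMono hx).monotone k.le_succ
    rw [Function.iterate_succ_apply', ih, retMap, hitTime_iterate_nthVisit hx,
      ← Function.iterate_add_apply, Nat.sub_add_cancel hle]

theorem tauSum_eq_nthVisit (hx : (visitTimes f Y x).Infinite) (k : ℕ) :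
    tauSum f Y k x = nthVisit f Y x k := by
  simp only [tauSum, retMap_iterate hx, hitTime_iterate_nthVisit hx]
  rw [Finset.sum_range_tsub (nthVisit_strictMono hx).monotone, nthVisit_zero, Nat.sub_zero]

theorem hasDensityZero_visitTimes_iff_tendsto_tauSum_div (hx : (visitTimes f Y x).Infinite) :
    HasDensityZero (visitTimes f Y x) ↔
      Tendsto (fun k : ℕ => (tauSum f Y k x : ℝ) / k) atTop atTop := by
  simp only [tauSum_eq_nthVisit hx, nthVisit]
  rw [← hasDensityZero_insert_zero_iff hx.nonempty,
    hasDensityZero_iff_tendsto_nth_div (hx.mono (subset_insert 0 _))]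

theorem HasDensityZero.visitTimes_of_bounded_hit (hY : HasDensityZero (visitTimes f Y x)) {B : ℕ}
    (hB : ∀ z ∈ S \ Y, ∃ n ≤ B, f^[n] z ∈ Y) : HasDensityZero (visitTimes f S x) := by
  refine hY.of_forall_exists_add_mem (B := B) fun m hm => ?_
  by_cases hmY : f^[m] x ∈ Y
  · exact ⟨0, B.zero_le, hmY⟩
  · simpa only [add_mem_visitTimes] using hB _ ⟨hm, hmY⟩

variable [MeasurableSpace α]

open scoped Classical in
theorem empMeasure_apply (hS : MeasurableSet S) (n : ℕ) :
    empMeasure f n x S = ENNReal.ofReal (Nat.count (· ∈ visitTimes f S x) n / n) := by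
  have hcount : ∑ k ∈ Finset.range n, Measure.dirac (f^[k] x) S =
      (Nat.count (· ∈ visitTimes f S x) n : ℝ≥0∞) := by
    rw [Nat.count_eq_card_filter_range, Finset.card_filter, Nat.cast_sum]
    refine Finset.sum_congr rfl fun k _ => ?_
    rw [Measure.dirac_apply' _ hS]
    by_cases hk : f^[k] x ∈ S <;> simp [visitTimes, hk]
  rcases n.eq_zero_or_pos with rfl | hn
  · simp [empMeasure]
  · rw [ENNReal.ofReal_div_of_pos (by exact_mod_cast hn), ENNReal.ofReal_natCast,
      ENNReal.ofReal_natCast, ENNReal.div_eq_inv_mul, ← hcount, empMeasure, Measure.smul_apply,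
      Measure.finsetSum_apply, smul_eq_mul]

theorem tendsto_empMeasure_zero_iff (hS : MeasurableSet S) :
    Tendsto (fun n => empMeasure f n x S) atTop (𝓝 0) ↔ HasDensityZero (visitTimes f S x) := by
  classical
  rw [HasDensityZero, Asymptotics.isLittleO_iff_tendsto (by simp),
    ← ENNReal.tendsto_toReal_zero_iff (by simp [empMeasure_apply hS])]
  refine tendsto_congr fun n => ?_
  rw [empMeasure_apply hS, ENNReal.toReal_ofReal (by positivity)]

end Visits

theorem stmt8_general {α : Type*} [TopologicalSpace α] [T2Space α] [MeasurableSpace α]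
    [OpensMeasurableSpace α] (f : α → α) {ι : Sort*} (ξ : ι → α) (Y : Set α) (hYc : IsCompact Y)
    (hYξ : ∀ j, ξ j ∉ Y)
    (hbd : ∀ K : Set α, IsCompact K → (∀ j, ξ j ∉ K) →
      ∃ B : ℕ, ∀ z ∈ K \ Y, ∃ n ≤ B, f^[n] z ∈ Y)
    (x : α) (hxrec : ∃ᶠ n in atTop, f^[n] x ∈ Y) :
    (∀ K : Set α, IsCompact K → (∀ j, ξ j ∉ K) →
        Tendsto (fun n => empMeasure f n x K) atTop (𝓝 0)) ↔
      Tendsto (fun k => (tauSum f Y k x : ℝ) / (k : ℝ)) atTop atTop := by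
  have hx : (visitTimes f Y x).Infinite := Nat.frequently_atTop_iff_infinite.1 hxrec
  rw [← hasDensityZero_visitTimes_iff_tendsto_tauSum_div hx]
  refine ⟨fun h => ?_, fun hY K hK hKξ => ?_⟩
  · exact (tendsto_empMeasure_zero_iff hYc.measurableSet).1 (h Y hYc hYξ)
  · obtain ⟨B, hB⟩ := hbd K hK hKξ
    exact (tendsto_empMeasure_zero_iff hK.measurableSet).2 (hY.visitTimes_of_bounded_hit hB)

/-- `e_n(x)(K) → 0` for every compact `K` avoiding `ξ₁,…,ξ_d` iff
`τ_k(x)/k → ∞`. -/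
theorem stmt8 (f : X → X) (hf : Measurable f) (d : ℕ) (hd : 1 ≤ d)
    (ξ : Fin d → X) (hξ : Function.Injective ξ)
    (Y : Set X) (hYc : IsCompact Y) (hYξ : ∀ j, ξ j ∉ Y)
    (hbd : ∀ K : Set X, IsCompact K → (∀ j, ξ j ∉ K) →
      ∃ B : ℕ, ∀ z ∈ K \ Y, ∃ n, 1 ≤ n ∧ n ≤ B ∧ f^[n] z ∈ Y)
    (x : X) (hxY : x ∈ Y) (hxrec : ∀ N : ℕ, ∃ n, N ≤ n ∧ 1 ≤ n ∧ f^[n] x ∈ Y) :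
    (∀ K : Set X, IsCompact K → (∀ j, ξ j ∉ K) →
        Tendsto (fun n => empMeasure f (n + 1) x K) atTop (𝓝 0)) ↔
      Tendsto (fun k => (tauSum f Y k x : ℝ) / (k : ℝ)) atTop atTop :=
  (forall₃_congr fun K _ _ => tendsto_add_atTop_iff_nat (f := (empMeasure f · x K)) 1).trans <|
    stmt8_general f ξ Y hYc hYξ
      (fun K hK hKξ => (hbd K hK hKξ).imp fun _ h z hz => (h z hz).imp fun _ => And.right) x <|
      frequently_atTop.2 fun N => (hxrec N).imp fun _ hn => ⟨hn.1, hn.2.2⟩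
end
end

section
/- For every x ∈ X, if V(x) ⊆ πS then V(x) = {ν_p̄ : p̄ ∈ T̃(x)}. -/
open MeasureTheory Filter Topology Set
open scoped ENNReal

noncomputable section

variable {X : Type*} [MetricSpace X] [CompactSpace X] [MeasurableSpace X] [BorelSpace X]

/-- `T̃(x) ⊆ [0,1]^d`: the set of limit points of the sequence
`((e_n(x)(X₁), …, e_n(x)(X_d)))_{n ≥ 1}`. -/
def Ttilde (f : X → X) {d : ℕ} (Xp : Fin d → Set X) (x : X) : Set (Fin d → ℝ) :=
  {p | ∃ φ : ℕ → ℕ, StrictMono φ ∧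
    Tendsto (fun n => fun j => ((empMeasure f (φ n + 1) x) (Xp j)).toReal) atTop (𝓝 p)}

/-!
The mass vector `Φ(ρ) = (ρ(X₁), …, ρ(X_d))` need not be weak* continuous, but by the portmanteau
theorem it is continuous at every measure that does not charge the frontiers of the `X_j`. The
measures `ν_p̄` have this property and satisfy `Φ(ν_p̄) = p̄`. Since the space of probability
measures is compact, a map continuous at all limit points of a sequence sends these onto the limit
points of the image sequence. Hence `V(x) ⊆ πS` gives `T̃(x) = Φ(V(x))`, and `p̄ ↦ ν_p̄` inverts `Φ`
on `V(x)`.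
-/

section ClusterPoints

variable {α Y Z : Type*} [TopologicalSpace Y] [TopologicalSpace Z]

theorem mapClusterPt_atTop_iff_exists_tendsto_subseq [FirstCountableTopology Y] {u : ℕ → Y}
    {y : Y} :
    MapClusterPt y atTop u ↔ ∃ φ : ℕ → ℕ, StrictMono φ ∧ Tendsto (u ∘ φ) atTop (𝓝 y) :=
  ⟨MapClusterPt.tendsto_subseq, fun ⟨_, hφ, h⟩ => h.mapClusterPt.of_comp hφ.tendsto_atTop⟩

theorem mapClusterPt_comp_iff_of_continuousAt [CompactSpace Y] [T2Space Z] {l : Filter α}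
    {u : α → Y} {g : Y → Z} (hg : ∀ y, MapClusterPt y l u → ContinuousAt g y) {z : Z} :
    MapClusterPt z l (g ∘ u) ↔ ∃ y, MapClusterPt y l u ∧ g y = z := by
  constructor
  · intro hz
    obtain ⟨U, hUl, hUz⟩ := mapClusterPt_iff_ultrafilter.1 hz
    have hUy : Tendsto u U (𝓝 (U.map u).lim) := (U.map u).le_nhds_lim
    have hy : MapClusterPt (U.map u).lim l u := mapClusterPt_iff_ultrafilter.2 ⟨U, hUl, hUy⟩
    exact ⟨_, hy, tendsto_nhds_unique ((hg _ hy).tendsto.comp hUy) hUz⟩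
  · rintro ⟨y, hy, rfl⟩
    exact hy.continuousAt_comp (hg y hy)

end ClusterPoints

section MassVector

variable {ι Ω : Type*} [MeasurableSpace Ω]

/-- The vector `(ν(E i))_i` of masses which a measure `ν` gives to a family of sets, written `Φ(ν)`
above. The limit points of its values along the empirical measures form `T̃(x)`. An infinite mass
is recorded as `0`. -/
def massVector (E : ι → Set Ω) (ν : Measure Ω) : ι → ℝ :=
  fun i => ν.real (E i)

theorem continuousAt_massVector [TopologicalSpace Ω] [OpensMeasurableSpace Ω]
    [HasOuterApproxClosed Ω] {E : ι → Set Ω} {ρ : ProbabilityMeasure Ω}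
    (hρ : ∀ i, (ρ : Measure Ω) (frontier (E i)) = 0) :
    ContinuousAt (fun σ : ProbabilityMeasure Ω => massVector E (σ : Measure Ω)) ρ :=
  tendsto_pi_nhds.2 fun i => (ENNReal.tendsto_toReal (measure_ne_top _ (E i))).comp
    (ProbabilityMeasure.tendsto_measure_of_null_frontier_of_tendsto' tendsto_id (hρ i))

end MassVector

section NuMeasure

variable {Ω : Type*} [MeasurableSpace Ω] [MeasurableSingletonClass Ω] {d : ℕ} {ξ : Fin d → Ω}
  {s : Set Ω}

theorem nuMeasure_apply (ξ : Fin d → Ω) (p : Fin d → ℝ) (s : Set Ω) :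
    nuMeasure ξ p s = ∑ i, ENNReal.ofReal (p i) * s.indicator 1 (ξ i) := by
  simp only [nuMeasure, Measure.finsetSum_apply, Measure.smul_apply, Measure.dirac_apply,
    smul_eq_mul]

theorem nuMeasure_eq_zero_of_forall_notMem (p : Fin d → ℝ) (hs : ∀ i, ξ i ∉ s) :
    nuMeasure ξ p s = 0 := by
  simp [nuMeasure_apply, hs]

theorem massVector_nuMeasure {E : Fin d → Set Ω} (hE : ∀ i j, ξ i ∈ E j ↔ i = j) {p : Fin d → ℝ}
    (hp : ∀ i, 0 ≤ p i) : massVector E (nuMeasure ξ p) = p := by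
  classical
  ext j
  simp [massVector, measureReal_def, nuMeasure_apply, indicator_apply, hE, hp]

end NuMeasure

theorem weakTendsto_coe_iff_exists_tendsto {Ω : Type*} [MetricSpace Ω] [MeasurableSpace Ω]
    [OpensMeasurableSpace Ω] {μ : ℕ → ProbabilityMeasure Ω} {ν : Measure Ω} :
    WeakTendsto (fun n => (μ n : Measure Ω)) ν ↔
      ∃ ρ : ProbabilityMeasure Ω, Tendsto μ atTop (𝓝 ρ) ∧ (ρ : Measure Ω) = ν := by
  constructor
  · intro h
    have hmass : ν.real univ = 1 := by
      simpa [tendsto_const_nhds_iff, eq_comm] using h (BoundedContinuousFunction.const Ω 1)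
    have hν : IsProbabilityMeasure ν := ⟨(ENNReal.toReal_eq_one_iff _).1 hmass⟩
    exact ⟨⟨ν, hν⟩, ProbabilityMeasure.tendsto_iff_forall_integral_tendsto.2 h, rfl⟩
  · rintro ⟨ρ, hρ, rfl⟩
    exact ProbabilityMeasure.tendsto_iff_forall_integral_tendsto.1 hρ

section EmpiricalMeasures

variable {Ω : Type*} [MeasurableSpace Ω]

instance isProbabilityMeasure_empMeasure (f : Ω → Ω) (n : ℕ) [NeZero n] (x : Ω) :
    IsProbabilityMeasure (empMeasure f n x) where
  measure_univ := by
    simp [empMeasure, ENNReal.inv_mul_cancel (Nat.cast_ne_zero.2 (NeZero.ne n))]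

/-- The sequence `e₁(x), e₂(x), …` of empirical measures in the space of probability measures,
indexed from `0` as in `Vset` and `Ttilde`. -/
def empProbabilityMeasure (f : Ω → Ω) (x : Ω) (n : ℕ) : ProbabilityMeasure Ω :=
  ⟨empMeasure f (n + 1) x, inferInstance⟩

theorem mem_Vset_iff_exists_mapClusterPt [MetricSpace Ω] [TopologicalSpace.SeparableSpace Ω]
    [BorelSpace Ω] {f : Ω → Ω} {x : Ω} {ν : Measure Ω} :
    ν ∈ Vset f x ↔ ∃ ρ : ProbabilityMeasure Ω,
      MapClusterPt ρ atTop (empProbabilityMeasure f x) ∧ (ρ : Measure Ω) = ν := by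
  have hsubseq (φ : ℕ → ℕ) : WeakTendsto (fun k => empMeasure f (φ k + 1) x) ν ↔
      ∃ ρ : ProbabilityMeasure Ω,
        Tendsto (empProbabilityMeasure f x ∘ φ) atTop (𝓝 ρ) ∧ (ρ : Measure Ω) = ν :=
    weakTendsto_coe_iff_exists_tendsto (μ := empProbabilityMeasure f x ∘ φ)
  simp only [Vset, mem_ofPred_eq, hsubseq, mapClusterPt_atTop_iff_exists_tendsto_subseq]
  tauto

theorem mem_Ttilde_iff_mapClusterPt {f : Ω → Ω} {d : ℕ} {E : Fin d → Set Ω} {x : Ω}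
    {p : Fin d → ℝ} :
    p ∈ Ttilde f E x ↔ MapClusterPt p atTop fun n => massVector E (empMeasure f (n + 1) x) :=
  (mapClusterPt_atTop_iff_exists_tendsto_subseq
    (u := fun n => massVector E (empMeasure f (n + 1) x))).symm

theorem mem_Ttilde_iff_exists_mem_Vset [MetricSpace Ω] [CompactSpace Ω] [BorelSpace Ω]
    {f : Ω → Ω} {d : ℕ} {E : Fin d → Set Ω} {x : Ω}
    (hE : ∀ ν ∈ Vset f x, ∀ j, ν (frontier (E j)) = 0) {p : Fin d → ℝ} :
    p ∈ Ttilde f E x ↔ ∃ ν ∈ Vset f x, massVector E ν = p := by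
  have hcont (ρ : ProbabilityMeasure Ω) (hρ : MapClusterPt ρ atTop (empProbabilityMeasure f x)) :
      ContinuousAt (fun σ : ProbabilityMeasure Ω => massVector E (σ : Measure Ω)) ρ :=
    continuousAt_massVector (hE ρ (mem_Vset_iff_exists_mapClusterPt.2 ⟨ρ, hρ, rfl⟩))
  simp only [mem_Ttilde_iff_mapClusterPt, mem_Vset_iff_exists_mapClusterPt,
    exists_exists_and_eq_and]
  exact mapClusterPt_comp_iff_of_continuousAt hcont

end EmpiricalMeasures

theorem stmt9_general (f : X → X) (d : ℕ) (ξ : Fin d → X) (Xp : Fin d → Set X)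
    (hξint : ∀ j, ξ j ∈ interior (Xp j))
    (hξcl : ∀ i j, i ≠ j → ξ i ∉ closure (Xp j))
    (x : X)
    (hVS : ∀ ν ∈ Vset f x, ∃ p ∈ simplexS d, ν = nuMeasure ξ p) :
    Vset f x = {ν | ∃ p ∈ Ttilde f Xp x, ν = nuMeasure ξ p} := by
  have hmem (i j : Fin d) : ξ i ∈ Xp j ↔ i = j :=
    ⟨fun h => by_contra fun hij => hξcl i j hij (subset_closure h),
      fun h => h ▸ interior_subset (hξint i)⟩
  have hfrontier (i j : Fin d) : ξ i ∉ frontier (Xp j) := by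
    rintro ⟨hcl, hint⟩
    obtain rfl | hij := eq_or_ne i j
    exacts [hint (hξint i), hξcl i j hij hcl]
  have hmass (p : Fin d → ℝ) (hp : p ∈ simplexS d) : massVector Xp (nuMeasure ξ p) = p :=
    massVector_nuMeasure hmem fun i => (hp.1 i).1
  have hnull (ν : Measure X) (hν : ν ∈ Vset f x) (j : Fin d) : ν (frontier (Xp j)) = 0 := by
    obtain ⟨p, -, rfl⟩ := hVS ν hν
    exact nuMeasure_eq_zero_of_forall_notMem p fun i => hfrontier i j
  ext ν
  constructor
  · intro hν
    obtain ⟨p, hp, rfl⟩ := hVS ν hν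
    exact ⟨p, (mem_Ttilde_iff_exists_mem_Vset hnull).2 ⟨_, hν, hmass p hp⟩, rfl⟩
  · rintro ⟨p, hpT, rfl⟩
    obtain ⟨ν, hν, rfl⟩ := (mem_Ttilde_iff_exists_mem_Vset hnull).1 hpT
    obtain ⟨q, hq, rfl⟩ := hVS ν hν
    rwa [hmass q hq]

/-- If `V(x) ⊆ πS` then `V(x) = {ν_p̄ : p̄ ∈ T̃(x)}`. -/
theorem stmt9 (f : X → X) (hf : Measurable f) (d : ℕ) (hd : 1 ≤ d)
    (ξ : Fin d → X) (hξ : Function.Injective ξ)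
    (Xp : Fin d → Set X) (hXm : ∀ j, MeasurableSet (Xp j))
    (hXd : Pairwise (Function.onFun Disjoint Xp))
    (hξint : ∀ j, ξ j ∈ interior (Xp j))
    (hξcl : ∀ i j, i ≠ j → ξ i ∉ closure (Xp j))
    (x : X)
    (hVS : ∀ ν ∈ Vset f x, ∃ p ∈ simplexS d, ν = nuMeasure ξ p) :
    Vset f x = {ν | ∃ p ∈ Ttilde f Xp x, ν = nuMeasure ξ p} :=
  stmt9_general f d ξ Xp hξint hξcl x hVS
end
end
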